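/- arXiv:1703.02376 — 2 statements merged into one kernel-verified Lean document; each statement's English description precedes it below -/
import Mathlib

section
/- Let $a \in [0,\infty)$, $b \in (-\infty, 0)$, $\gamma \in (-\infty, b)$, $\alpha, \beta \in \mathbb{R}$, $y_0 \in [0,\infty)$ and $x_0 \in \mathbb{R}$. Define $m_Y(t) := \mathrm{e}^{-bt} y_0 + a \int_0^t \mathrm{e}^{-b(t-u)}\,\mathrm{d}u$ and $m_X(t) := \mathrm{e}^{-\gamma t} x_0 + \int_0^t \mathrm{e}^{-\gamma(t-u)} (\alpha - \beta\, m_Y(u))\,\mathrm{d}u$ for $t \in [0,\infty)$. Put $C_* := \tfrac{\beta}{\gamma-b} y_0 + x_0 - \tfrac{\alpha}{\gamma} + \tfrac{a\beta}{b\gamma} - \tfrac{a\beta}{b(\gamma-b)}$. Then there exists a constant $C \in [0,\infty)$ such that $\bigl| m_X(t) - C_* \mathrm{e}^{-\gamma t} \bigr| \leq C\, \mathrm{e}^{-bt}$ for all $t \in [0,\infty)$; in particular $\mathrm{e}^{\gamma t} m_X(t) \to C_*$ as $t \to \infty$. -/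
/-!
Both convolution integrals are elementary, so `m_X` has a closed form: with
`K = (α - βa/b)/γ` and `L = β(y₀ - a/b)/(γ - b)`,
`m_X(t) = C* e^{-γt} + K - L e^{-bt}`.
Since `b < 0`, we have `1 ≤ e^{-bt}` for `t ≥ 0`, so `C = |K| + |L|` works. The limit follows by
multiplying the bound by `e^{γt}`, because `e^{(γ-b)t} → 0`. The integrals are evaluated in
`integral_exp_conv`.
-/

open MeasureTheory Filter Real

/-- Variation of constants for an affine-exponential source `p + q e^{-du}`; the condition
`c ≠ d` excludes resonance. -/
lemma integral_exp_conv (c d p q t : ℝ) (hc : c ≠ 0) (hcd : c - d ≠ 0) :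
    ∫ u in (0:ℝ)..t, Real.exp (-c * (t - u)) * (p + q * Real.exp (-d * u))
      = p * (1 - Real.exp (-c * t)) / c
        + q * (Real.exp (-d * t) - Real.exp (-c * t)) / (c - d) := by
  have hderiv : ∀ u ∈ Set.uIcc (0:ℝ) t, HasDerivAt
      (fun u => p / c * Real.exp (-c * (t - u)) + q / (c - d) * Real.exp ((c - d) * u - c * t))
      (Real.exp (-c * (t - u)) * (p + q * Real.exp (-d * u))) u := by
    intro u _
    have h1 : HasDerivAt (fun u : ℝ => -c * (t - u)) c u := by
      simpa using ((hasDerivAt_id u).const_sub t).const_mul (-c)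
    have h2 : HasDerivAt (fun u : ℝ => (c - d) * u - c * t) (c - d) u := by
      simpa using ((hasDerivAt_id u).const_mul (c - d)).sub_const (c * t)
    refine ((h1.exp.const_mul (p / c)).add (h2.exp.const_mul (q / (c - d)))).congr_deriv ?_
    have h3 : Real.exp ((c - d) * u - c * t)
        = Real.exp (-c * (t - u)) * Real.exp (-d * u) := by
      rw [← Real.exp_add]; ring_nf
    rw [h3]
    field_simp
  rw [intervalIntegral.integral_eq_sub_of_hasDerivAt hderiv
    (Continuous.intervalIntegrable (by fun_prop) _ _)]
  have h4 : (c - d) * t - c * t = -d * t := by ring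
  have h5 : 0 - c * t = -c * t := by ring
  simp only [h4, h5, sub_self, sub_zero, mul_zero, Real.exp_zero]
  ring

/-- Asymptotics of the first-moment functions of a supercritical two-factor affine diffusion
with `γ < b < 0`: `m_X(t)` equals `C* e^{-γt}` up to an error of order `e^{-bt}`, where
`C* = β/(γ-b) y₀ + x₀ - α/γ + aβ/(bγ) - aβ/(b(γ-b))`; in particular
`e^{γt} m_X(t) → C*` as `t → ∞`. -/
theorem supercritical_first_moment_asymptotics
    (a : ℝ) (ha : 0 ≤ a) (b γ : ℝ) (hb : b < 0) (hγ : γ < b)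
    (α β : ℝ) (y₀ : ℝ) (hy₀ : 0 ≤ y₀) (x₀ : ℝ)
    (mY mX : ℝ → ℝ)
    (hmY : ∀ t : ℝ, mY t
      = Real.exp (-b * t) * y₀ + a * ∫ u in (0:ℝ)..t, Real.exp (-b * (t - u)))
    (hmX : ∀ t : ℝ, mX t
      = Real.exp (-γ * t) * x₀
        + ∫ u in (0:ℝ)..t, Real.exp (-γ * (t - u)) * (α - β * mY u))
    (Cstar : ℝ)
    (hCstar : Cstar = β / (γ - b) * y₀ + x₀ - α / γ + a * β / (b * γ)
      - a * β / (b * (γ - b))) :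
    (∃ C : ℝ, 0 ≤ C ∧ ∀ t : ℝ, 0 ≤ t →
      |mX t - Cstar * Real.exp (-γ * t)| ≤ C * Real.exp (-b * t)) ∧
    Tendsto (fun t => Real.exp (γ * t) * mX t) atTop (nhds Cstar) := by
  have hb0 : b ≠ 0 := hb.ne
  have hγ0 : γ ≠ 0 := (hγ.trans hb).ne
  have hγb : γ - b ≠ 0 := (sub_neg.mpr hγ).ne
  have hY : ∀ t, mY t = a / b + (y₀ - a / b) * Real.exp (-b * t) := by
    intro t
    have h := integral_exp_conv b 0 1 0 t hb0 (by simpa using hb0)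
    simp only [zero_mul, add_zero, mul_one, zero_div, one_mul] at h
    rw [hmY, h]
    ring
  set K := (α - β * a / b) / γ with hK
  set L := β * (y₀ - a / b) / (γ - b) with hL
  have hX : ∀ t, mX t - Cstar * Real.exp (-γ * t) = K - L * Real.exp (-b * t) := by
    intro t
    have h := integral_exp_conv γ b (α - β * a / b) (-(β * (y₀ - a / b))) t hγ0 hγb
    have hsource : ∀ u, α - β * mY u
        = α - β * a / b + -(β * (y₀ - a / b)) * Real.exp (-b * u) := by
      intro u; rw [hY]; ring
    simp only [hmX, hsource]
    rw [h, hCstar, hK, hL]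
    field_simp
    ring
  have hbound : ∀ t : ℝ, 0 ≤ t →
      |mX t - Cstar * Real.exp (-γ * t)| ≤ (|K| + |L|) * Real.exp (-b * t) := by
    intro t ht
    have h1 : 1 ≤ Real.exp (-b * t) := Real.one_le_exp (by nlinarith)
    rw [hX]
    calc |K - L * Real.exp (-b * t)| ≤ |K| + |L * Real.exp (-b * t)| := abs_sub _ _
      _ = |K| + |L| * Real.exp (-b * t) := by rw [abs_mul, Real.abs_exp]
      _ ≤ (|K| + |L|) * Real.exp (-b * t) := by nlinarith [abs_nonneg K]
  refine ⟨⟨|K| + |L|, by positivity, hbound⟩, ?_⟩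
  have hdecay : Tendsto (fun t : ℝ => (|K| + |L|) * Real.exp ((γ - b) * t)) atTop (nhds 0) := by
    have h := (Real.tendsto_exp_atBot.comp
      (tendsto_id.const_mul_atTop_of_neg (sub_neg.mpr hγ))).const_mul (|K| + |L|)
    simpa using h
  rw [tendsto_iff_norm_sub_tendsto_zero]
  refine squeeze_zero' (Eventually.of_forall fun t => norm_nonneg _) ?_ hdecay
  filter_upwards [eventually_ge_atTop 0] with t ht
  have hexp : Real.exp (γ * t) * Real.exp (-γ * t) = 1 := by
    rw [← Real.exp_add]; simp
  have hfactor : Real.exp (γ * t) * mX t - Cstar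
      = Real.exp (γ * t) * (mX t - Cstar * Real.exp (-γ * t)) := by
    linear_combination Cstar * hexp
  have hsplit : Real.exp ((γ - b) * t) = Real.exp (γ * t) * Real.exp (-b * t) := by
    rw [← Real.exp_add]; ring_nf
  rw [hfactor, Real.norm_eq_abs, abs_mul, Real.abs_exp, hsplit]
  calc _ ≤ Real.exp (γ * t) * ((|K| + |L|) * Real.exp (-b * t)) := by
        gcongr; exact hbound t ht
    _ = _ := by ring
end

section
/- Let $b \in (-\infty, 0)$, $\sigma_1 \in \mathbb{R}$, and let $Y : [0,\infty) \to [0,\infty)$ be a continuous function such that $\mathrm{e}^{bt} Y(t) \to V$ as $t \to \infty$ for some $V \in (0,\infty)$. For $T \in (0,\infty)$ define $\widehat{b}_T := \frac{(Y(T) - Y(0)) \int_0^T Y(s)\,\mathrm{d}s - \tfrac{T}{2}(Y(T)^2 - Y(0)^2) + \tfrac{T}{2} \sigma_1^2 \int_0^T Y(s)\,\mathrm{d}s}{T \int_0^T Y(s)^2\,\mathrm{d}s - \bigl( \int_0^T Y(s)\,\mathrm{d}s \bigr)^2}$. Then $\widehat{b}_T \to b$ as $T \to \infty$. -/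
open MeasureTheory Filter Real

/-!
With `c = -b > 0` the path grows like `V e^{cT}`. The lemma `tendsto_exp_neg_mul_integral` says that
integration preserves exponential asymptotics up to the factor `1 / c`, so that
`e^{bT} ∫₀ᵀ Y → V / (-b)` and `e^{2bT} ∫₀ᵀ Y² → V² / (-2b)`. Multiplying the numerator and the
denominator of `b̂_T` by `e^{2bT} / T`, every term vanishes in the limit except `-Y(T)² / 2` in the
numerator, giving `-V² / 2`, and `∫₀ᵀ Y²` in the denominator, giving `V² / (-2b)`.
The quotient of the two limits is `b`.
-/

/-- A function on `[0,∞)` that is continuous and convergent at infinity is bounded. -/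
lemma exists_bound_of_tendsto_atTop {g : ℝ → ℝ} {L : ℝ} (hg : ContinuousOn g (Set.Ici 0))
    (hlim : Tendsto g atTop (nhds L)) : ∃ M : ℝ, ∀ t, 0 ≤ t → |g t| ≤ M := by
  have h1 : ∀ᶠ t in atTop, |g t| < |L| + 1 := hlim.abs.eventually_lt_const (by linarith)
  obtain ⟨N, hN⟩ := eventually_atTop.1 h1
  obtain ⟨C, hC⟩ := (isCompact_Icc (a := (0 : ℝ)) (b := N)).exists_bound_of_continuousOn
    (hg.mono Set.Icc_subset_Ici_self)
  refine ⟨max C (|L| + 1), fun t ht => ?_⟩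
  rcases le_total t N with h | h
  · exact (hC t ⟨ht, h⟩).trans (le_max_left _ _)
  · exact (hN t h).le.trans (le_max_right _ _)

/-- The substitution `s = T - u` turns the left-hand side into
`∫₀ᵀ e^{-cu} g(T - u) du` with `g(s) = e^{-cs} f(s)`; since `g` is bounded and tends to `L`,
dominated convergence gives the limit `∫₀^∞ e^{-cu} L du = L / c`. -/
lemma tendsto_exp_neg_mul_integral {f : ℝ → ℝ} {c L : ℝ} (hc : 0 < c)
    (hf : ContinuousOn f (Set.Ici 0))
    (hlim : Tendsto (fun t => Real.exp (-c * t) * f t) atTop (nhds L)) :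
    Tendsto (fun T => Real.exp (-c * T) * ∫ s in (0:ℝ)..T, f s) atTop (nhds (L / c)) := by
  set g : ℝ → ℝ := fun t => Real.exp (-c * t) * f t with hg_def
  have hg : ContinuousOn g (Set.Ici 0) := by
    apply ContinuousOn.mul _ hf
    fun_prop
  obtain ⟨M, hM⟩ := exists_bound_of_tendsto_atTop hg hlim
  have hM0 : 0 ≤ M := (abs_nonneg _).trans (hM 0 le_rfl)
  have key : Tendsto (fun T => ∫ u in Set.Ioi (0:ℝ),
      (Set.Ioc 0 T).indicator (fun u => Real.exp (-c * u) * g (T - u)) u) atTop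
      (nhds (∫ u in Set.Ioi (0:ℝ), Real.exp (-c * u) * L)) := by
    refine tendsto_integral_filter_of_dominated_convergence (fun u => Real.exp (-c * u) * M)
      ?_ ?_ ?_ ?_
    · refine Eventually.of_forall fun T => ?_
      refine AEStronglyMeasurable.restrict ?_
      refine (aestronglyMeasurable_indicator_iff measurableSet_Ioc).2 ?_
      refine ContinuousOn.aestronglyMeasurable ?_ measurableSet_Ioc
      refine ContinuousOn.mul (by fun_prop) (hg.comp (by fun_prop) fun u hu => ?_)
      exact sub_nonneg.2 hu.2
    · refine Eventually.of_forall fun T => Eventually.of_forall fun u => ?_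
      by_cases hu : u ∈ Set.Ioc 0 T
      · rw [Set.indicator_of_mem hu, norm_mul, Real.norm_eq_abs, Real.norm_eq_abs, Real.abs_exp]
        exact mul_le_mul_of_nonneg_left (hM _ (by linarith [hu.2])) (Real.exp_pos _).le
      · rw [Set.indicator_of_notMem hu, norm_zero]
        positivity
    · exact (integrableOn_exp_mul_Ioi (neg_lt_zero.2 hc) 0).mul_const M
    · refine (ae_restrict_iff' measurableSet_Ioi).2 (Eventually.of_forall fun u hu => ?_)
      have h2 : Tendsto (fun T => Real.exp (-c * u) * g (T - u)) atTop
          (nhds (Real.exp (-c * u) * L)) :=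
        (hlim.comp (tendsto_atTop_add_const_right _ (-u) tendsto_id)).const_mul _
      refine h2.congr' ?_
      filter_upwards [eventually_ge_atTop u] with T hT
      rw [Set.indicator_of_mem (show u ∈ Set.Ioc 0 T from ⟨hu, hT⟩)]
  have hval : ∫ u in Set.Ioi (0:ℝ), Real.exp (-c * u) * L = L / c := by
    rw [integral_mul_const, integral_exp_mul_Ioi (neg_lt_zero.2 hc) 0]
    simp
    field_simp
  rw [hval] at key
  refine key.congr' ?_
  filter_upwards [eventually_ge_atTop 0] with T hT
  rw [setIntegral_indicator measurableSet_Ioc,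
    Set.inter_eq_right.2 Set.Ioc_subset_Ioi_self, ← intervalIntegral.integral_of_le hT,
    ← intervalIntegral.integral_const_mul]
  have h3 := intervalIntegral.integral_comp_sub_left
    (fun s => Real.exp (-c * T) * f s) T (a := 0) (b := T)
  rw [sub_self, sub_zero] at h3
  rw [← h3]
  refine intervalIntegral.integral_congr fun u _ => ?_
  simp only [hg_def]
  rw [← mul_assoc, ← Real.exp_add]
  congr 2
  ring

/-- Pathwise strong consistency of the CLSE of `b` for a supercritical CIR path: if `b < 0`,
`Y : [0,∞) → [0,∞)` is continuous and `e^{bt} Y(t) → V ∈ (0,∞)`, then the estimator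
`b̂_T` (expressed through `Y(0)`, `Y(T)`, `∫_0^T Y` and `∫_0^T Y²`) converges to `b`. -/
theorem clse_b_supercritical_consistency
    (b : ℝ) (hb : b < 0) (σ₁ : ℝ)
    (Y : ℝ → ℝ) (hY_cont : ContinuousOn Y (Set.Ici 0))
    (hY_nonneg : ∀ t ∈ Set.Ici (0:ℝ), 0 ≤ Y t)
    (V : ℝ) (hV : 0 < V)
    (hlim : Tendsto (fun t => Real.exp (b * t) * Y t) atTop (nhds V))
    (bhat : ℝ → ℝ)
    (hbhat : ∀ T : ℝ, 0 < T → bhat T =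
      ((Y T - Y 0) * (∫ s in (0:ℝ)..T, Y s)
        - T / 2 * ((Y T) ^ 2 - (Y 0) ^ 2)
        + T / 2 * σ₁ ^ 2 * ∫ s in (0:ℝ)..T, Y s)
      / (T * (∫ s in (0:ℝ)..T, (Y s) ^ 2) - (∫ s in (0:ℝ)..T, Y s) ^ 2)) :
    Tendsto bhat atTop (nhds b) := by
  have hA := tendsto_exp_neg_mul_integral (c := -b) (neg_pos.2 hb) hY_cont
    (by simpa only [neg_neg] using hlim)
  have hB := tendsto_exp_neg_mul_integral (f := fun s => Y s ^ 2) (c := -(2 * b)) (L := V ^ 2)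
    (by linarith) (hY_cont.pow 2) (by
      refine (hlim.pow 2).congr fun t => ?_
      rw [mul_pow, ← Real.exp_nat_mul]
      congr 2
      push_cast
      ring)
  simp only [neg_neg] at hA hB
  have hE : Tendsto (fun T : ℝ => Real.exp (b * T)) atTop (nhds 0) :=
    Real.tendsto_exp_atBot.comp (tendsto_id.const_mul_atTop_of_neg hb)
  have hI : Tendsto (fun T : ℝ => T⁻¹) atTop (nhds 0) := tendsto_inv_atTop_zero
  have hnum := ((((hlim.sub (hE.mul_const (Y 0))).mul hA).mul hI).sub
    (((hlim.pow 2).sub ((hE.pow 2).mul_const (Y 0 ^ 2))).const_mul (1 / 2))).add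
    ((hE.mul hA).const_mul (σ₁ ^ 2 / 2))
  have hden := hB.sub ((hA.pow 2).mul hI)
  have hV2 : V ^ 2 ≠ 0 := by positivity
  have hb0 : b ≠ 0 := hb.ne
  have hne : V ^ 2 / -(2 * b) - (V / -b) ^ 2 * 0 ≠ 0 := by
    rw [mul_zero, sub_zero]
    exact div_ne_zero hV2 (by simpa using hb0)
  have hq := hnum.div hden hne
  have hval : ((V - 0 * Y 0) * (V / -b) * 0 - 1 / 2 * (V ^ 2 - 0 ^ 2 * Y 0 ^ 2)
      + σ₁ ^ 2 / 2 * (0 * (V / -b))) / (V ^ 2 / -(2 * b) - (V / -b) ^ 2 * 0) = b := by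
    simp
    field_simp
  rw [hval] at hq
  refine hq.congr' ?_
  filter_upwards [eventually_gt_atTop 0] with T hT
  have hE2 : Real.exp (2 * b * T) = Real.exp (b * T) ^ 2 := by
    rw [← Real.exp_nat_mul]
    congr 1
    push_cast
    ring
  have hk : Real.exp (b * T) ^ 2 * T⁻¹ ≠ 0 := by positivity
  rw [hbhat T hT]
  refine Eq.trans ?_ (mul_div_mul_left _ _ hk)
  simp only [Pi.div_apply, hE2]
  congr 1 <;> field_simp
end
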